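/- For every positive integer n there exists a word of length n over a 4-letter alphabet that avoids abelian 3-powers cyclically. (In particular, A(4) ≤ 3.) -/

import Mathlib

/-- `u` is an abelian `N`-power of period `m`: a concatenation of `N` nonempty
pairwise abelian-equivalent words of common length `m`. -/
def IsAbelianPower {α : Type*} (N m : ℕ) (u : List α) : Prop :=
  0 < m ∧ ∃ f : Fin N → List α,
    u = (List.ofFn f).flatten ∧ (∀ i, (f i).length = m) ∧ ∀ i j, List.Perm (f i) (f j)

/-- `u` occurs in the infinite word `w^ω`, i.e. `u` is a factor of `w^k` for some `k`. -/
def OccursCyc {α : Type*} (w u : List α) : Prop :=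
  ∃ k : ℕ, u <:+: (List.replicate k w).flatten

/-- `w` avoids abelian `N`-powers cyclically: every abelian `N`-power of period `m`
occurring in `w^ω` satisfies `m ≥ |w|`. -/
def AvoidsAbelianCyc {α : Type*} (N : ℕ) (w : List α) : Prop :=
  ∀ m u, IsAbelianPower N m u → OccursCyc w u → w.length ≤ m

/-!
Let `u` be a word, `a` a letter not in `u`, and `w = ua`. An abelian `N`-power in `w^ω` gives
`N + 1` prefixes of `w^ω` whose Parikh vectors are in arithmetic progression. A prefix with `c`
occurrences of `a` is `w^c r` with `r` a prefix of `u`, so subtracting `c` times the Parikh vector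
of `w` is a linear operation, and the Parikh vectors of the remainders `r` are again in arithmetic
progression. If the Parikh vectors of the prefixes of `u` contain no nonconstant progression of
`N + 1` terms, then the period is a multiple of `|w|`.

Prefixes of Dekking's cube-free words have this property for `N = 3`. The weights `1, 2, 3` give the
images of letters total weight `0` modulo 7, and the weight of a cut of an image word determines its
displacement from a nearby cut between images of letters. As the weights lie in `{0, 1, 2, 4}`,
which has no nonconstant progression of four terms in `ℤ/7`, four cuts in progression have a common
displacement, and the progression descends to the preimage.
-/

open Function Matrix

/-- `S` contains no nonconstant arithmetic progression `x, x + d, …, x + N • d`; the index `N`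
counts the steps, so the progression has `N + 1` terms. -/
def APFree {G : Type*} [AddMonoid G] (N : ℕ) (S : Set G) : Prop :=
  ∀ x d : G, (∀ j ≤ N, x + j • d ∈ S) → d = 0

namespace APFree

lemma mono {G : Type*} [AddMonoid G] {N : ℕ} {S T : Set G} (hT : APFree N T) (hST : S ⊆ T) :
    APFree N S :=
  fun x d h => hT x d fun j hj => hST (h j hj)

variable {G H : Type*} [AddCommGroup G] [AddCommGroup H] {N : ℕ}

lemma image (hN : N ≠ 0) {S : Set H} (hS : APFree N S) {f : H →+ G} (hf : Injective f) :
    APFree N (f '' S) := by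
  intro x d h
  obtain ⟨y, -, hy⟩ := h 0 N.zero_le
  obtain ⟨z, -, hz⟩ := h 1 (Nat.one_le_iff_ne_zero.2 hN)
  obtain rfl : f y = x := by simpa using hy
  obtain rfl : f (z - y) = d := by simp [hz]
  rw [hS y (z - y) fun j hj => ?_, map_zero]
  simpa only [← map_nsmul, ← map_add, hf.mem_set_image] using h j hj

/-- Along a progression in `S`, the values of `φ` on the `O`-components form a progression too, so
these components are all equal and the `A`-components form a progression with the same step. -/
lemma of_forall_exists_sub_mem {Q : Type*} [AddCommGroup Q] {S A O : Set G} {φ : G →+ Q}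
    (hA : APFree N A) (hφA : ∀ a ∈ A, φ a = 0) (hφO : Set.InjOn φ O) (hO : APFree N (φ '' O))
    (hS : ∀ s ∈ S, ∃ a ∈ A, s - a ∈ O) : APFree N S := by
  intro x d h
  choose! a ha ho using fun j hj => hS _ (h j hj)
  have φ_offset (j : ℕ) (hj : j ≤ N) : φ (x + j • d - a j) = φ x + j • φ d := by
    simp [hφA _ (ha j hj)]
  have hφd : φ d = 0 := hO (φ x) (φ d) fun j hj => ⟨_, ho j hj, φ_offset j hj⟩
  have offset_eq (j : ℕ) (hj : j ≤ N) : x + j • d - a j = x + 0 • d - a 0 :=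
    hφO (ho j hj) (ho 0 N.zero_le) <| by
      rw [φ_offset j hj, φ_offset 0 N.zero_le, hφd, smul_zero, smul_zero]
  have a_eq (j : ℕ) (hj : j ≤ N) : a j = a 0 + j • d := by
    have := offset_eq j hj
    rw [zero_smul, add_zero, sub_eq_sub_iff_add_eq_add, add_assoc, add_right_inj] at this
    rw [← this, add_comm]
  exact hA (a 0) d fun j hj => a_eq j hj ▸ ha j hj

end APFree

section Parikh

variable {α β : Type*} [DecidableEq α] [DecidableEq β]

/-- The Parikh vector of a word: the number of occurrences of each letter. It takes values in `ℤ`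
so that Parikh vectors can be subtracted. -/
def parikh (w : List α) : α → ℤ := fun a => w.count a

lemma parikh_nil : parikh ([] : List α) = 0 := rfl

lemma parikh_append (v w : List α) : parikh (v ++ w) = parikh v + parikh w := by
  ext; simp [parikh]

lemma parikh_singleton (a : α) : parikh [a] = Pi.single a 1 := by
  ext b
  by_cases hb : b = a
  · simp [parikh, hb]
  · simp [parikh, hb, Ne.symm hb]

lemma parikh_cons (a : α) (w : List α) : parikh (a :: w) = Pi.single a 1 + parikh w := by
  rw [← List.singleton_append, parikh_append, parikh_singleton]

lemma parikh_apply_eq_zero {a : α} {w : List α} (ha : a ∉ w) : parikh w a = 0 := by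
  simp [parikh, List.count_eq_zero_of_not_mem ha]

lemma parikh_eq_iff_perm {v w : List α} : parikh v = parikh w ↔ v.Perm w := by
  simp [parikh, funext_iff, List.perm_iff_count]

lemma parikh_flatten_of_forall_perm {L : List (List α)} {v : List α} (h : ∀ u ∈ L, u.Perm v) :
    parikh L.flatten = L.length • parikh v := by
  induction L with
  | nil => simp [parikh_nil]
  | cons u L ih =>
    rw [List.forall_mem_cons] at h
    rw [List.flatten_cons, parikh_append, parikh_eq_iff_perm.2 h.1, ih h.2, List.length_cons,
      succ_nsmul']

lemma parikh_flatten_replicate (k : ℕ) (w : List α) :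
    parikh (List.replicate k w).flatten = k • parikh w := by
  have all_perm : ∀ u ∈ List.replicate k w, u.Perm w :=
    fun _ hu => .of_eq (List.eq_of_mem_replicate hu)
  rw [parikh_flatten_of_forall_perm all_perm, List.length_replicate]

lemma parikh_map {f : α → β} (hf : Injective f) (w : List α) :
    parikh (w.map f) = ExtendByZero.linearMap ℤ f (parikh w) := by
  ext b
  by_cases hb : ∃ a, f a = b
  · obtain ⟨a, rfl⟩ := hb
    simp [parikh, hf.extend_apply, List.count_map_of_injective w f hf]
  · have b_notMem : b ∉ w.map f := fun hmem =>
      let ⟨a, _, ha⟩ := List.mem_map.1 hmem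
      hb ⟨a, ha⟩
    rw [parikh_apply_eq_zero b_notMem, ExtendByZero.linearMap_apply, extend_apply' _ _ _ hb,
      Pi.zero_apply]

/-- The Parikh vectors of the prefixes of `w`. That this set is `APFree N` means that `w` contains
no signed abelian `N`-power: no `N + 1` cuts of `w`, in any order, have the same nonzero
displacement from each cut to the next. Ordinary abelian `N`-powers are given by increasing cuts. -/
def prefixParikh (w : List α) : Set (α → ℤ) := parikh '' {p | p <+: w}

lemma prefixParikh_mono {v w : List α} (h : v <+: w) : prefixParikh v ⊆ prefixParikh w :=
  Set.image_mono fun _ hp => hp.trans h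

lemma apFree_prefixParikh_singleton (a : α) {N : ℕ} (hN : 2 ≤ N) :
    APFree N (prefixParikh [a]) := by
  intro x d h
  ext b
  have coord (j : ℕ) (hj : j ≤ N) : x b + j * d b = 0 ∨ x b + j * d b = 1 := by
    obtain ⟨p, hp, hpx⟩ := h j hj
    have hcount : parikh p b = x b + j * d b := by simp [hpx]
    have hle : p.count b ≤ 1 := (hp.sublist.count_le b).trans List.count_le_length
    rw [← hcount, parikh]
    omega
  have h0 := coord 0 N.zero_le
  have h2 := coord 2 hN
  change d b = 0
  push_cast at h0 h2
  omega

lemma apFree_prefixParikh_map {N : ℕ} (hN : N ≠ 0) {f : α → β} (hf : Injective f) {w : List α}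
    (hw : APFree N (prefixParikh w)) : APFree N (prefixParikh (w.map f)) := by
  refine (hw.image hN (f := (ExtendByZero.linearMap ℤ f).toAddMonoidHom)
    (extend_injective hf (0 : β → ℤ))).mono ?_
  rintro _ ⟨p, hp, rfl⟩
  obtain ⟨q, hq, rfl⟩ := List.prefix_map_iff.1 hp
  exact ⟨parikh q, ⟨q, hq, rfl⟩, (parikh_map hf q).symm⟩

end Parikh

section Prefix

variable {α β : Type*}

lemma prefix_append_cases {p v w : List α} (h : p <+: v ++ w) :
    p <+: v ∨ ∃ q, q <+: w ∧ p = v ++ q := by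
  obtain hp | ⟨q, rfl⟩ := List.prefix_or_prefix_of_prefix h (List.prefix_append v w)
  · exact .inl hp
  · exact .inr ⟨q, (List.prefix_append_right_inj v).1 h, rfl⟩

lemma prefix_flatMap_cases {h : α → List β} {w : List α} {p : List β}
    (hp : p <+: w.flatMap h) :
    p = w.flatMap h ∨ ∃ r a q, r ++ [a] <+: w ∧ q <+: h a ∧ p = r.flatMap h ++ q := by
  induction w generalizing p with
  | nil => exact .inl (List.prefix_nil.1 hp)
  | cons a w ih =>
    obtain hp | ⟨s, hs, rfl⟩ := prefix_append_cases (List.flatMap_cons ▸ hp)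
    · exact .inr ⟨[], a, p, by simp, hp, rfl⟩
    · obtain rfl | ⟨r, b, q, hr, hq, rfl⟩ := ih hs
      · exact .inl List.flatMap_cons.symm
      · exact .inr ⟨a :: r, b, q, by simpa using hr, hq, by simp⟩

lemma exists_prefix_of_prefix_flatten_replicate {u p : List α} {a : α} {k : ℕ}
    (hp : p <+: (List.replicate k (u ++ [a])).flatten) :
    ∃ c r, r <+: u ∧ p = (List.replicate c (u ++ [a])).flatten ++ r := by
  induction k generalizing p with
  | zero => exact ⟨0, [], List.nil_prefix, by simpa using hp⟩
  | succ k ih =>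
    rw [List.replicate_succ, List.flatten_cons] at hp
    obtain hp | ⟨s, hs, rfl⟩ := prefix_append_cases hp
    · obtain rfl | hp := List.prefix_concat_iff.1 hp
      · exact ⟨1, [], List.nil_prefix, by simp⟩
      · exact ⟨0, p, hp, rfl⟩
    · obtain ⟨c, r, hr, rfl⟩ := ih hs
      exact ⟨c + 1, r, hr, by simp [List.replicate_succ]⟩

end Prefix

section Cyclic

variable {α : Type*} [DecidableEq α] {N : ℕ}

lemma IsAbelianPower.exists_parikh (hN : N ≠ 0) {m : ℕ} {v : List α} (hv : IsAbelianPower N m v) :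
    ∃ b : List α, b.length = m ∧ ∀ j ≤ N, ∃ p, p <+: v ∧ parikh p = j • parikh b := by
  obtain ⟨-, f, rfl, hlen, hperm⟩ := hv
  let i₀ : Fin N := ⟨0, Nat.pos_of_ne_zero hN⟩
  refine ⟨f i₀, hlen i₀, fun j hj => ⟨((List.ofFn f).take j).flatten,
    (List.take_prefix j _).flatten, ?_⟩⟩
  rw [parikh_flatten_of_forall_perm (v := f i₀), List.length_take, List.length_ofFn,
    min_eq_left hj]
  intro u hu
  obtain ⟨i, rfl⟩ := List.mem_ofFn.1 (List.mem_of_mem_take hu)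
  exact hperm i i₀

/-- Subtracts from `v` the multiple of `parikh (u ++ [a])` that cancels its `a`-coordinate (when
`a ∉ u`). On Parikh vectors of prefixes of `(u ++ [a])^ω` this discards the complete periods. -/
def reduceModPeriod (u : List α) (a : α) : (α → ℤ) →+ (α → ℤ) where
  toFun v := v - v a • parikh (u ++ [a])
  map_zero' := by simp
  map_add' v w := by rw [Pi.add_apply, add_smul]; abel

lemma reduceModPeriod_parikh_mem {u p : List α} {a : α} (ha : a ∉ u) {k : ℕ}
    (hp : p <+: (List.replicate k (u ++ [a])).flatten) :
    reduceModPeriod u a (parikh p) ∈ prefixParikh u := by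
  obtain ⟨c, r, hr, rfl⟩ := exists_prefix_of_prefix_flatten_replicate hp
  refine ⟨r, hr, ?_⟩
  have hra : parikh r a = 0 := parikh_apply_eq_zero fun h => ha (hr.subset h)
  have hua : parikh u a = 0 := parikh_apply_eq_zero ha
  simp [reduceModPeriod, parikh_append, parikh_flatten_replicate, parikh_singleton, hra, hua]

theorem avoidsAbelianCyc_concat (hN : N ≠ 0) {u : List α} {a : α} (ha : a ∉ u)
    (hu : APFree N (prefixParikh u)) : AvoidsAbelianCyc N (u ++ [a]) := by
  rintro m v hv ⟨k, s, t, hst⟩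
  obtain ⟨b, rfl, hb⟩ := hv.exists_parikh hN
  have reduce_b : reduceModPeriod u a (parikh b) = 0 := by
    refine hu (reduceModPeriod u a (parikh s)) _ fun j hj => ?_
    obtain ⟨p, hp, hpb⟩ := hb j hj
    rw [← map_nsmul, ← map_add, ← hpb, ← parikh_append]
    refine reduceModPeriod_parikh_mem ha (k := k) ?_
    rw [← hst, List.append_assoc, List.prefix_append_right_inj]
    exact hp.trans (List.prefix_append v t)
  have b_perm : b.Perm (List.replicate (b.count a) (u ++ [a])).flatten := by
    rw [← parikh_eq_iff_perm, parikh_flatten_replicate, ← natCast_zsmul]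
    exact sub_eq_zero.1 reduce_b
  have b_length : b.length = b.count a * (u ++ [a]).length := by
    simpa using b_perm.length_eq
  have b_count_ne_zero : b.count a ≠ 0 := fun h => hv.1.ne' (by rw [b_length, h, zero_mul])
  rw [b_length]
  exact Nat.le_mul_of_pos_left _ (Nat.pos_of_ne_zero b_count_ne_zero)

end Cyclic

section Morphism

variable {α β : Type*} [Fintype α] [DecidableEq α] [DecidableEq β]

/-- The incidence matrix of the morphism of free monoids `w ↦ w.flatMap h`: its column `a` is the
Parikh vector of `h a`. -/
def incidenceMatrix (h : α → List β) : Matrix β α ℤ := Matrix.of fun b a => parikh (h a) b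

lemma parikh_flatMap (h : α → List β) (w : List α) :
    parikh (w.flatMap h) = incidenceMatrix h *ᵥ parikh w := by
  induction w with
  | nil => simp [parikh_nil]
  | cons a w ih =>
    rw [List.flatMap_cons, parikh_append, parikh_cons, mulVec_add, mulVec_single_one, ih]
    rfl

/-- Dekking's criterion. The set `O` collects the displacements of the cuts inside an image `h a`
from one of the two ends of `h a`. -/
theorem apFree_prefixParikh_flatMap {Q : Type*} [AddCommGroup Q] {N : ℕ} (hN : N ≠ 0)
    {h : α → List β} (h_inj : Injective (incidenceMatrix h).mulVec) {O : Set (β → ℤ)}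
    (zero_mem : 0 ∈ O)
    (offset_mem : ∀ a q, q <+: h a → ∃ r, r <+: [a] ∧ parikh q - parikh (r.flatMap h) ∈ O)
    {φ : (β → ℤ) →+ Q} (φ_image : ∀ a, φ (parikh (h a)) = 0) (φ_inj : Set.InjOn φ O)
    (φ_apFree : APFree N (φ '' O)) {w : List α} (hw : APFree N (prefixParikh w)) :
    APFree N (prefixParikh (w.flatMap h)) := by
  let M : (α → ℤ) →+ (β → ℤ) := (incidenceMatrix h).mulVecLin.toAddMonoidHom
  have M_parikh (r : List α) : M (parikh r) = parikh (r.flatMap h) := (parikh_flatMap h r).symm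
  refine (hw.image hN (f := M) h_inj).of_forall_exists_sub_mem (φ := φ) ?_ φ_inj φ_apFree ?_
  · rintro _ ⟨_, ⟨r, -, rfl⟩, rfl⟩
    rw [M_parikh]
    induction r with
    | nil => simp [parikh_nil]
    | cons a r ih => rw [List.flatMap_cons, parikh_append, map_add, φ_image, ih, add_zero]
  · rintro _ ⟨p, hp, rfl⟩
    obtain rfl | ⟨r, a, q, hra, hq, rfl⟩ := prefix_flatMap_cases hp
    · exact ⟨_, ⟨_, ⟨w, List.prefix_rfl, rfl⟩, M_parikh w⟩, by rwa [sub_self]⟩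
    · obtain ⟨r', hr', hO⟩ := offset_mem a q hq
      refine ⟨_, ⟨_, ⟨r ++ r', ?_, rfl⟩, M_parikh _⟩, ?_⟩
      · exact ((List.prefix_append_right_inj r).2 hr').trans hra
      · rwa [List.flatMap_append, parikh_append, parikh_append, add_sub_add_left_eq_sub]

end Morphism

lemma two_pow_le_length_iterate_flatMap {α : Type*} {h : α → List α} (hh : ∀ a, 2 ≤ (h a).length)
    (a : α) (k : ℕ) : 2 ^ k ≤ ((List.flatMap h)^[k] [a]).length := by
  induction k with
  | zero => simp
  | succ k ih =>
    rw [iterate_succ_apply', List.length_flatMap]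
    calc 2 ^ (k + 1) ≤ ((List.flatMap h)^[k] [a]).length • 2 := by
          rw [pow_succ, smul_eq_mul]; gcongr
      _ ≤ _ := by
          simpa using List.card_nsmul_le_sum (((List.flatMap h)^[k] [a]).map fun b => (h b).length)
            2 (by simpa using fun b _ => hh b)

section Dekking

/-- Dekking's ternary morphism, whose fixed point contains no abelian cube. -/
def dekking : Fin 3 → List (Fin 3) := ![[0, 0, 1, 2], [1, 1, 2], [0, 2, 2]]

/-- The displacements of the cuts inside an image of `dekking` from a suitable end of it. -/
def dekkingOffsets : Finset (Fin 3 → ℤ) := {![0, 0, 0], ![1, 0, 0], ![0, -1, -1], ![0, 0, -1]}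

/-- Dekking's homomorphism onto `ℤ/7`. It kills the Parikh vectors of the images of `dekking` and
maps `dekkingOffsets` onto `{0, 1, 2, 4}`. -/
def dekkingHom : (Fin 3 → ℤ) →+ ZMod 7 where
  toFun v := v 0 + 2 * v 1 + 3 * v 2
  map_zero' := by simp
  map_add' v w := by simp only [Pi.add_apply]; push_cast; ring

lemma injective_mulVec_incidenceMatrix_dekking : Injective (incidenceMatrix dekking).mulVec :=
  have det_eq : (incidenceMatrix dekking).det = 7 := by decide
  mulVec_injective_of_det_ne_zero (by simp [det_eq])

lemma exists_sub_mem_dekkingOffsets (a : Fin 3) (q : List (Fin 3)) (hq : q <+: dekking a) :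
    ∃ r, r <+: [a] ∧ parikh q - parikh (r.flatMap dekking) ∈ dekkingOffsets := by
  have cuts : ∀ a, ∀ q ∈ (dekking a).inits, ∃ r ∈ [a].inits,
      parikh q - parikh (r.flatMap dekking) ∈ dekkingOffsets := by decide
  simpa only [List.mem_inits] using cuts a q ((List.mem_inits q _).2 hq)

lemma dekkingHom_injOn_dekkingOffsets : Set.InjOn dekkingHom dekkingOffsets := by
  have : ∀ x ∈ dekkingOffsets, ∀ y ∈ dekkingOffsets, dekkingHom x = dekkingHom y → x = y := by
    decide
  exact fun x hx y hy => this x hx y hy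

lemma apFree_dekkingHom_image : APFree 3 (dekkingHom '' dekkingOffsets) := by
  have image_eq : dekkingOffsets.image dekkingHom = {0, 1, 2, 4} := by decide
  have apFree : ∀ x d : ZMod 7,
      (∀ j ≤ 3, x + j • d ∈ ({0, 1, 2, 4} : Finset (ZMod 7))) → d = 0 := by decide
  rw [← Finset.coe_image, image_eq]
  exact fun x d h => apFree x d h

lemma apFree_prefixParikh_iterate_dekking (k : ℕ) :
    APFree 3 (prefixParikh ((List.flatMap dekking)^[k] [0])) := by
  induction k with
  | zero => exact apFree_prefixParikh_singleton 0 (by norm_num)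
  | succ k ih =>
    rw [iterate_succ_apply']
    exact apFree_prefixParikh_flatMap three_ne_zero injective_mulVec_incidenceMatrix_dekking
      (zero_mem := by decide) exists_sub_mem_dekkingOffsets (φ_image := by decide)
      dekkingHom_injOn_dekkingOffsets apFree_dekkingHom_image ih

lemma exists_length_eq_apFree_prefixParikh (n : ℕ) :
    ∃ u : List (Fin 3), u.length = n ∧ APFree 3 (prefixParikh u) := by
  have hlen : n ≤ ((List.flatMap dekking)^[n] [0]).length :=
    n.lt_two_pow_self.le.trans (two_pow_le_length_iterate_flatMap (by decide) 0 n)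
  exact ⟨_, List.length_take_of_le hlen,
    (apFree_prefixParikh_iterate_dekking n).mono (prefixParikh_mono (List.take_prefix n _))⟩

end Dekking

theorem quaternary_avoids_abelian_3_powers_cyclically :
    ∀ n : ℕ, 0 < n → ∃ w : List (Fin 4), w.length = n ∧ AvoidsAbelianCyc 3 w := by
  intro n hn
  obtain ⟨u, hu, hfree⟩ := exists_length_eq_apFree_prefixParikh (n - 1)
  have last_fresh : Fin.last 3 ∉ u.map Fin.castSucc := by
    intro h
    obtain ⟨x, -, hx⟩ := List.mem_map.1 h
    exact x.castSucc_ne_last hx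
  have map_free : APFree 3 (prefixParikh (u.map Fin.castSucc)) :=
    apFree_prefixParikh_map three_ne_zero (Fin.castSucc_injective 3) hfree
  refine ⟨u.map Fin.castSucc ++ [Fin.last 3], ?_,
    avoidsAbelianCyc_concat three_ne_zero last_fresh map_free⟩
  rw [List.length_append, List.length_map, hu, List.length_singleton, Nat.sub_add_cancel hn]
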